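/- arXiv:math/0303009 — 2 statements merged into one kernel-verified Lean document; each statement's English description precedes it below -/
import Mathlib

section
/- For real numbers a and b, the Minkowski sum of the left monad of a and the right monad of b equals the full monad of a + b; that is, {a − x : x a positive infinitesimal hyperreal} + {b + y : y a positive infinitesimal hyperreal} = {w : ℝ* | w − (a + b) is infinitesimal} (the precise version of the paper's mixed rule "⁻a + b⁺ = ⁻(a+b)⁺"). -/
open Hyperreal

/-- The left monad of a real number `a`. -/
def leftMonad (a : ℝ) : Set ℝ* :=
  {y | ∃ x : ℝ*, Infinitesimal x ∧ 0 < x ∧ y = (a : ℝ*) - x}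

/-- The right monad of a real number `a`. -/
def rightMonad (a : ℝ) : Set ℝ* :=
  {y | ∃ x : ℝ*, Infinitesimal x ∧ 0 < x ∧ y = (a : ℝ*) + x}

/-- Minkowski sum of two sets of hyperreals. -/
def minkSum (S T : Set ℝ*) : Set ℝ* :=
  {w | ∃ s ∈ S, ∃ t ∈ T, w = s + t}

/-- The mixed rule `⁻a + b⁺`: the sum of a left monad and a right monad is the
full monad of `a + b`. -/
theorem leftMonad_add_rightMonad (a b : ℝ) :
    minkSum (leftMonad a) (rightMonad b) =
      {w : ℝ* | Infinitesimal (w - ((a + b : ℝ) : ℝ*))} := by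
  ext w
  simp only [minkSum, leftMonad, rightMonad, Set.mem_setOf_eq]
  constructor
  · rintro ⟨s, ⟨x, hx, hx0, rfl⟩, t, ⟨y, hy, hy0, rfl⟩, rfl⟩
    have h := hy.add hx.neg
    have e : (a : ℝ*) - x + (b + y) - ((a + b : ℝ) : ℝ*) = y + -x := by
      rw [Hyperreal.coe_add]; ring
    rw [e]; exact h
  · intro h
    rw [Hyperreal.coe_add] at h
    rcases le_or_gt 0 (w - ((a : ℝ*) + b)) with h0 | h0
    · exact ⟨_, ⟨epsilon, infinitesimal_epsilon, epsilon_pos, rfl⟩, _,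
        ⟨epsilon + (w - ((a : ℝ*) + b)), infinitesimal_epsilon.add h,
          add_pos_of_pos_of_nonneg epsilon_pos h0, rfl⟩, by ring⟩
    · exact ⟨_, ⟨epsilon + -(w - ((a : ℝ*) + b)), infinitesimal_epsilon.add h.neg,
        add_pos epsilon_pos (neg_pos.2 h0), rfl⟩, _,
        ⟨epsilon, infinitesimal_epsilon, epsilon_pos, rfl⟩, by ring⟩
end

section
/- For real numbers a > 0 and b > 0, the pointwise product of the right monad of a and the right monad of b equals the right monad of a·b; that is, {(a + x)·(b + y) : x, y positive infinitesimal hyperreals} = {(a·b) + z : z a positive infinitesimal hyperreal} (the paper's claim a⁺ · b⁺ = (a·b)⁺). -/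
open Hyperreal

/-- Pointwise product of two sets of hyperreals. -/
def ptwiseProd (S T : Set ℝ*) : Set ℝ* :=
  {w | ∃ s ∈ S, ∃ t ∈ T, w = s * t}

theorem inf_cmul (c : ℝ) {x : ℝ*} (hx : Infinitesimal x) : Infinitesimal ((c : ℝ*) * x) := by
  have h := (isSt_refl_real c).mul hx
  rw [mul_zero] at h
  exact h

theorem inf_dom {x y : ℝ*} (hx : Infinitesimal x) (h0 : 0 < y) (h : y ≤ x) :
    Infinitesimal y := by
  rw [infinitesimal_def] at *
  intro r hr
  have hr' : (0 : ℝ*) < r := coe_pos.2 hr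
  exact ⟨by linarith, lt_of_le_of_lt h (hx r hr).2⟩

/-- For positive reals, `a⁺ · b⁺ = (a·b)⁺`. -/
theorem rightMonad_mul (a b : ℝ) (ha : 0 < a) (hb : 0 < b) :
    ptwiseProd (rightMonad a) (rightMonad b) = rightMonad (a * b) := by
  have ha' : (0 : ℝ*) < a := coe_pos.2 ha
  have hb' : (0 : ℝ*) < b := coe_pos.2 hb
  ext w
  constructor
  · rintro ⟨s, ⟨x, hx, hx0, rfl⟩, t, ⟨y, hy, hy0, rfl⟩, rfl⟩
    refine ⟨a * y + b * x + x * y, ((inf_cmul a hy).add (inf_cmul b hx)).add (hx.mul hy),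
      by positivity, ?_⟩
    rw [coe_mul]
    ring
  · rintro ⟨z, hz, hz0, rfl⟩
    have hx : Infinitesimal (((2 * b)⁻¹ : ℝ) * z : ℝ*) := inf_cmul _ hz
    have hx0 : (0 : ℝ*) < ((2 * b)⁻¹ : ℝ) * z := mul_pos (coe_pos.2 (by positivity)) hz0
    have hbx : (b : ℝ*) * (((2 * b)⁻¹ : ℝ) * z) = z / 2 := by
      have : (b : ℝ*) * ((2 * b)⁻¹ : ℝ) = (2 : ℝ*)⁻¹ := by
        rw [coe_inv, coe_mul]
        have h2 : ((2 : ℝ) : ℝ*) = 2 := rfl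
        rw [h2]
        field_simp
      rw [← mul_assoc, this]
      ring
    generalize (((2 * b)⁻¹ : ℝ) * z : ℝ*) = x at hx hx0 hbx
    refine ⟨a + x, ⟨x, hx, hx0, rfl⟩, b + (z / 2) / (a + x), ⟨(z / 2) / (a + x), ?_, by positivity,
      rfl⟩, ?_⟩
    · refine inf_dom (inf_cmul a⁻¹ hz) (by positivity) ?_
      rw [coe_inv, div_le_iff₀ (by positivity)]
      have : (a : ℝ*)⁻¹ * z * (a + x) = z + (a : ℝ*)⁻¹ * z * x := by field_simp
      rw [this]
      have : 0 < (a : ℝ*)⁻¹ * z * x := by positivity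
      linarith
    · have hne : (a : ℝ*) + x ≠ 0 := by positivity
      rw [coe_mul, mul_add, mul_div_cancel₀ _ hne]
      linear_combination -hbx
end
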